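/- Let F(x) be analytic near 1 with Taylor expansion F(x) = ∑_{n≥0} a_n (x-1)^n, and let r ≥ 1. Then for x₁ in a punctured neighborhood of 1, the limit as x₂,...,x_{r+1} → 1 of the sum ∑_{j=1}^{r+1} F(x_j)/∏_{i≠j}(x_j - x_i) equals (F(x₁) - a₀ - a₁(x₁-1) - ... - a_{r-1}(x₁-1)^{r-1})/(x₁-1)^r. -/

import Mathlib

open scoped BigOperators Topology

/-!
Peeling off the node `x` from the divided difference of `F` at `x, y₁, …, y_r` leaves
`F x / ∏ (x - yᵢ)` plus the divided difference at `y₁, …, y_r` of `g z = F z / (z - x)`, which is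
analytic at `c`. As the `yᵢ` tend to `c`, the latter tends to the Taylor coefficient `q_{r-1}` of
`g`: the divided difference of `(z - c) ^ m` at `r` nodes vanishes for `m < r - 1`, equals `1` for
`m = r - 1`, and for `m > r - 1` is small enough to be summed against the Taylor series. Comparing
coefficients in `F z = (z - x) g z` gives `pₙ₊₁ = qₙ - (x - c) qₙ₊₁`, so that `∑_{i<r} pᵢ (x - c)ⁱ`
telescopes to `-(x - c)^r q_{r-1}`.
-/

section DividedDifference

variable {K : Type*} [Field K] {n : ℕ}

/-- The divided difference of `f` at the nodes `v`, of order one less than the number of nodes, in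
Lagrange's symmetric form. Where two nodes coincide, division by zero makes the terms of both
vanish, so this is the usual notion only for injective `v`. -/
def dividedDifference (f : K → K) (v : Fin n → K) : K :=
  ∑ j, f (v j) / ∏ i ∈ Finset.univ.erase j, (v j - v i)

lemma dividedDifference_congr {f g : K → K} {v : Fin n → K} (h : ∀ j, f (v j) = g (v j)) :
    dividedDifference f v = dividedDifference g v := by
  simp only [dividedDifference, h]

lemma dividedDifference_sub (f g : K → K) (v : Fin n → K) :
    dividedDifference (fun z => f z - g z) v = dividedDifference f v - dividedDifference g v := by
  simp only [dividedDifference, sub_div, Finset.sum_sub_distrib]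

lemma dividedDifference_sum_mul {ι : Type*} (s : Finset ι) (f : ι → K → K) (a : ι → K)
    (v : Fin n → K) :
    dividedDifference (fun z => ∑ k ∈ s, f k z * a k) v =
      ∑ k ∈ s, dividedDifference (f k) v * a k := by
  simp only [dividedDifference, Finset.sum_div, Finset.sum_mul, div_mul_eq_mul_div]
  exact Finset.sum_comm

lemma hasSum_mul_dividedDifference [TopologicalSpace K] [IsTopologicalSemiring K] {ι : Type*}
    {f : ι → K → K} {a : ι → K} {g : K → K} {v : Fin n → K}
    (h : ∀ j, HasSum (fun m => a m * f m (v j)) (g (v j))) :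
    HasSum (fun m => a m * dividedDifference (f m) v) (dividedDifference g v) := by
  simp only [dividedDifference, Finset.mul_sum, ← mul_div_assoc]
  exact hasSum_sum fun j _ => (h j).div_const _

lemma dividedDifference_cons (f : K → K) (x : K) (y : Fin n → K) :
    dividedDifference f (Fin.cons x y : Fin (n + 1) → K) =
      f x / ∏ i, (x - y i) + dividedDifference (fun z => f z / (z - x)) y := by
  simp [dividedDifference, Fin.sum_univ_succ, ← Finset.filter_ne', Finset.prod_filter,
    Fin.prod_univ_succ, (Fin.succ_ne_zero _).symm, div_div]

lemma dividedDifference_eval {v : Fin (n + 1) → K} (hv : Function.Injective v) {P : Polynomial K}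
    (hP : P.natDegree ≤ n) : dividedDifference (fun z => P.eval z) v = P.coeff n := by
  have hdeg : P.degree < (Finset.univ : Finset (Fin (n + 1))).card := by
    rw [Finset.card_fin]
    exact (Polynomial.degree_le_of_natDegree_le hP).trans_lt (by exact_mod_cast n.lt_succ_self)
  simpa [dividedDifference] using (Lagrange.coeff_eq_sum hv.injOn hdeg).symm

lemma dividedDifference_const {v : Fin (n + 2) → K} (hv : Function.Injective v) (a : K) :
    dividedDifference (fun _ => a) v = 0 := by
  simpa [Polynomial.coeff_C] using dividedDifference_eval hv (P := Polynomial.C a) (by simp)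

lemma dividedDifference_cons_eq_slope (f : K → K) {x : K} {y : Fin (n + 1) → K}
    (h : Function.Injective (Fin.cons x y : Fin (n + 2) → K)) :
    dividedDifference f (Fin.cons x y : Fin (n + 2) → K) = dividedDifference (slope f x) y := by
  calc dividedDifference f (Fin.cons x y : Fin (n + 2) → K)
      = dividedDifference (fun z => f z - f x) (Fin.cons x y : Fin (n + 2) → K) := by
        rw [dividedDifference_sub, dividedDifference_const h, sub_zero]
    _ = dividedDifference (slope f x) y := by
        rw [dividedDifference_cons, sub_self, zero_div, zero_add]
        simp only [slope_fun_def_field]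

lemma slope_sub_pow (c : K) {x z : K} (h : z ≠ x) (m : ℕ) :
    slope (fun z => (z - c) ^ m) x z =
      ∑ k ∈ Finset.range m, (z - c) ^ k * (x - c) ^ (m - 1 - k) := by
  rw [slope_def_field, div_eq_iff (sub_ne_zero.2 h), ← geom_sum₂_mul, sub_sub_sub_cancel_right]

lemma dividedDifference_sub_pow_cons (c : K) {x : K} {y : Fin (n + 1) → K}
    (h : Function.Injective (Fin.cons x y : Fin (n + 2) → K)) (m : ℕ) :
    dividedDifference (fun z => (z - c) ^ m) (Fin.cons x y : Fin (n + 2) → K) =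
      ∑ k ∈ Finset.range m, dividedDifference (fun z => (z - c) ^ k) y * (x - c) ^ (m - 1 - k) := by
  have hne (j : Fin (n + 1)) : y j ≠ x := fun hj => (Fin.cons_injective_iff.1 h).1 ⟨j, hj⟩
  rw [dividedDifference_cons_eq_slope _ h, ← dividedDifference_sum_mul]
  exact dividedDifference_congr fun j => slope_sub_pow c (hne j) m

lemma dividedDifference_sub_pow_of_le (c : K) {v : Fin (n + 1) → K} (hv : Function.Injective v)
    {m : ℕ} (hm : m ≤ n) :
    dividedDifference (fun z => (z - c) ^ m) v = if m = n then 1 else 0 := by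
  have hmonic : ((Polynomial.X - Polynomial.C c) ^ m).Monic := (Polynomial.monic_X_sub_C c).pow m
  have hdeg : ((Polynomial.X - Polynomial.C c) ^ m).natDegree = m := by simp
  have heval := dividedDifference_eval hv (hdeg.trans_le hm)
  simp only [Polynomial.eval_pow, Polynomial.eval_sub, Polynomial.eval_X,
    Polynomial.eval_C] at heval
  rw [heval]
  split_ifs with hmn
  · rw [← hmn]
    simpa only [hdeg] using hmonic.coeff_natDegree
  · exact Polynomial.coeff_eq_zero_of_natDegree_lt (by lia)

end DividedDifference

lemma sum_range_choose_eq_choose_succ (m n : ℕ) :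
    ∑ k ∈ Finset.range m, k.choose n = m.choose (n + 1) := by
  induction m with
  | zero => simp
  | succ m ih => rw [Finset.sum_range_succ, ih, Nat.choose_succ_succ, add_comm]

section NormedField

variable {K : Type*} [NormedField K] {n : ℕ}

lemma norm_dividedDifference_sub_pow_le {c : K} {δ : ℝ} {v : Fin (n + 1) → K}
    (hv : Function.Injective v) (hδ : ∀ i, ‖v i - c‖ ≤ δ) (m : ℕ) :
    ‖dividedDifference (fun z => (z - c) ^ m) v‖ ≤ m.choose n * δ ^ (m - n) := by
  have hδ0 : 0 ≤ δ := (norm_nonneg _).trans (hδ 0)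
  induction n generalizing m with
  | zero => simpa [dividedDifference] using pow_le_pow_left₀ (norm_nonneg _) (hδ 0) m
  | succ n ih =>
    induction v using Fin.consCases with
    | cons x y =>
    have hx : ‖x - c‖ ≤ δ := hδ 0
    have hy (k : ℕ) := ih (Fin.cons_injective_iff.1 hv).2 (fun i => hδ i.succ) k
    have hpow (k : ℕ) (hk : k < m) :
        (k.choose n : ℝ) * δ ^ (k - n) * δ ^ (m - 1 - k) = k.choose n * δ ^ (m - (n + 1)) := by
      rcases lt_or_ge k n with hkn | hnk
      · simp [Nat.choose_eq_zero_of_lt hkn]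
      · rw [mul_assoc, ← pow_add]
        congr 2
        lia
    rw [dividedDifference_sub_pow_cons c hv]
    calc ‖∑ k ∈ Finset.range m,
          dividedDifference (fun z => (z - c) ^ k) y * (x - c) ^ (m - 1 - k)‖
        ≤ ∑ k ∈ Finset.range m, (k.choose n : ℝ) * δ ^ (k - n) * δ ^ (m - 1 - k) := by
          refine norm_sum_le_of_le _ fun k _ => ?_
          rw [norm_mul, norm_pow]
          gcongr
          exact hy k
      _ = ∑ k ∈ Finset.range m, (k.choose n : ℝ) * δ ^ (m - (n + 1)) :=
          Finset.sum_congr rfl fun k hk => hpow k (Finset.mem_range.1 hk)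
      _ = m.choose (n + 1) * δ ^ (m - (n + 1)) := by
          rw [← Finset.sum_mul, ← sum_range_choose_eq_choose_succ, Nat.cast_sum]

lemma norm_dividedDifference_sub_pow_sub_ite_le {c : K} {δ ρ : ℝ} (hρ : 0 < ρ) (hδρ : δ ≤ ρ)
    {v : Fin (n + 1) → K} (hv : Function.Injective v) (hδ : ∀ i, ‖v i - c‖ ≤ δ) (m : ℕ) :
    ‖dividedDifference (fun z => (z - c) ^ m) v - (if m = n then 1 else 0)‖ ≤
      (2 * ρ) ^ m / ρ ^ (n + 1) * δ := by
  have hδ0 : 0 ≤ δ := (norm_nonneg _).trans (hδ 0)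
  rcases le_or_gt m n with hmn | hnm
  · rw [dividedDifference_sub_pow_of_le c hv hmn, sub_self, norm_zero]
    positivity
  · obtain ⟨l, rfl⟩ := Nat.exists_eq_add_of_lt hnm
    have hchoose : ((n + l + 1).choose n : ℝ) ≤ 2 ^ (n + l + 1) := by
      exact_mod_cast Nat.choose_le_two_pow _ _
    rw [if_neg hnm.ne', sub_zero]
    calc ‖dividedDifference (fun z => (z - c) ^ (n + l + 1)) v‖
        ≤ (n + l + 1).choose n * δ ^ (n + l + 1 - n) := norm_dividedDifference_sub_pow_le hv hδ _
      _ = (n + l + 1).choose n * (δ ^ l * δ) := by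
          rw [show n + l + 1 - n = l + 1 by lia, pow_succ]
      _ ≤ 2 ^ (n + l + 1) * (ρ ^ l * δ) := by gcongr
      _ = (2 * ρ) ^ (n + l + 1) / ρ ^ (n + 1) * δ := by
          field_simp
          ring

lemma norm_dividedDifference_sub_coeff_le {c : K} {δ ρ : ℝ} (hρ : 0 < ρ) (hδρ : δ ≤ ρ)
    {g : K → K} {a : ℕ → K} (ha : Summable fun m => ‖a m‖ * (2 * ρ) ^ m)
    {v : Fin (n + 1) → K} (hv : Function.Injective v) (hδ : ∀ i, ‖v i - c‖ ≤ δ)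
    (hg : ∀ j, HasSum (fun m => a m * (v j - c) ^ m) (g (v j))) :
    ‖dividedDifference g v - a n‖ ≤ (∑' m, ‖a m‖ * (2 * ρ) ^ m) / ρ ^ (n + 1) * δ := by
  have hcoeff : HasSum (fun m => a m * if m = n then 1 else 0) (a n) := by
    simpa using hasSum_single n (f := fun m => a m * if m = n then 1 else 0) (by simp +contextual)
  have herror : HasSum (fun m => a m *
      (dividedDifference (fun z => (z - c) ^ m) v - if m = n then 1 else 0))
      (dividedDifference g v - a n) := by
    simpa only [mul_sub] using
      (hasSum_mul_dividedDifference (f := fun m z => (z - c) ^ m) hg).sub hcoeff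
  refine herror.norm_le_of_bounded ((ha.hasSum.div_const _).mul_right _) fun m => ?_
  rw [norm_mul, mul_div_assoc, mul_assoc]
  gcongr
  exact norm_dividedDifference_sub_pow_sub_ite_le hρ hδρ hv hδ m

end NormedField

section PowerSeries

variable {𝕜 : Type*} [NontriviallyNormedField 𝕜] {g : 𝕜 → 𝕜} {p q : FormalMultilinearSeries 𝕜 𝕜 𝕜}
  {c x : 𝕜}

lemma eventually_hasSum_coeff_mul_sub_pow (hg : HasFPowerSeriesAt g q c) :
    ∀ᶠ z in 𝓝 c, HasSum (fun m => q.coeff m * (z - c) ^ m) (g z) := by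
  simpa [mul_comm] using hg.eventually_hasSum_sub

lemma isBigO_dividedDifference_sub_coeff (hg : HasFPowerSeriesAt g q c) (n : ℕ) :
    (fun v : Fin (n + 1) → 𝕜 => dividedDifference g v - q.coeff n)
      =O[𝓝[{v | Function.Injective v}] fun _ => c] fun v => ‖v - fun _ => c‖ := by
  obtain ⟨s, hs0, hsq⟩ := ENNReal.lt_iff_exists_nnreal_btwn.1 hg.radius_pos
  set ρ : ℝ := s / 2 with hρdef
  have hρ : 0 < ρ := half_pos (by exact_mod_cast hs0)
  have hsum : Summable fun m => ‖q.coeff m‖ * (2 * ρ) ^ m := by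
    simpa [hρdef, mul_div_cancel₀, FormalMultilinearSeries.norm_apply_eq_norm_coef] using
      q.summable_norm_mul_pow hsq
  have hnear : ∀ᶠ v : Fin (n + 1) → 𝕜 in 𝓝 fun _ => c,
      ∀ j, HasSum (fun m => q.coeff m * (v j - c) ^ m) (g (v j)) :=
    Filter.eventually_all.2 fun j =>
      (continuous_apply j).tendsto (fun _ => c) |>.eventually <|
        eventually_hasSum_coeff_mul_sub_pow hg
  have hball : ∀ᶠ v : Fin (n + 1) → 𝕜 in 𝓝 fun _ => c, ‖v - fun _ => c‖ ≤ ρ := by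
    filter_upwards [Metric.closedBall_mem_nhds _ hρ] with v hv
    exact mem_closedBall_iff_norm.1 hv
  refine Asymptotics.IsBigO.of_bound ((∑' m, ‖q.coeff m‖ * (2 * ρ) ^ m) / ρ ^ (n + 1)) ?_
  filter_upwards [hnear.filter_mono nhdsWithin_le_nhds, hball.filter_mono nhdsWithin_le_nhds,
    self_mem_nhdsWithin] with v hv hvρ hinj
  rw [norm_norm]
  exact norm_dividedDifference_sub_coeff_le hρ hvρ hsum hinj (norm_le_pi_norm (v - fun _ => c)) hv

lemma tendsto_dividedDifference (hg : HasFPowerSeriesAt g q c) (n : ℕ) :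
    Filter.Tendsto (fun v : Fin (n + 1) → 𝕜 => dividedDifference g v)
      (𝓝[{v | Function.Injective v}] fun _ => c) (𝓝 (q.coeff n)) := by
  have hnorm : Filter.Tendsto (fun v : Fin (n + 1) → 𝕜 => ‖v - fun _ => c‖)
      (𝓝[{v | Function.Injective v}] fun _ => c) (𝓝 0) :=
    (tendsto_norm_sub_self _).mono_left nhdsWithin_le_nhds
  exact tendsto_sub_nhds_zero_iff.1 ((isBigO_dividedDifference_sub_coeff hg n).trans_tendsto hnorm)

lemma coeff_zero_of_sub_mul (hg : HasFPowerSeriesAt g q c)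
    (hf : HasFPowerSeriesAt (fun z => (z - x) * g z) p c) :
    p.coeff 0 = (c - x) * q.coeff 0 := by
  rw [FormalMultilinearSeries.coeff, FormalMultilinearSeries.coeff, hf.coeff_zero, hg.coeff_zero]

lemma coeff_succ_of_sub_mul (hg : HasFPowerSeriesAt g q c)
    (hf : HasFPowerSeriesAt (fun z => (z - x) * g z) p c) (n : ℕ) :
    p.coeff (n + 1) = q.coeff n + (c - x) * q.coeff (n + 1) := by
  have hdslope : dslope (fun z => (z - x) * g z) c = g + (c - x) • dslope g c := by
    ext z
    rcases eq_or_ne z c with rfl | hz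
    · have hderiv : HasDerivAt (fun z => (z - x) * g z) (1 * g z + (z - x) * deriv g z) z :=
        ((hasDerivAt_id z).sub_const x).mul hg.differentiableAt.hasDerivAt
      simp [hderiv.deriv]
    · have hzc : z - c ≠ 0 := sub_ne_zero.2 hz
      simp only [dslope_of_ne _ hz, slope_def_field, Pi.add_apply, Pi.smul_apply, smul_eq_mul]
      field_simp
      ring
  have hseries : HasFPowerSeriesAt (dslope (fun z => (z - x) * g z) c)
      (q + (c - x) • q.fslope) c :=
    hdslope ▸ hg.add hg.has_fpower_series_dslope_fslope.const_smul
  have hcoeff := congrArg (fun s => s.coeff n)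
    (hf.has_fpower_series_dslope_fslope.eq_formalMultilinearSeries hseries)
  have hadd : (q + (c - x) • q.fslope).coeff n = q.coeff n + (c - x) * q.fslope.coeff n := rfl
  simpa only [hadd, FormalMultilinearSeries.coeff_fslope] using hcoeff

lemma sum_coeff_mul_pow_of_sub_mul (hg : HasFPowerSeriesAt g q c)
    (hf : HasFPowerSeriesAt (fun z => (z - x) * g z) p c) (n : ℕ) :
    ∑ i ∈ Finset.range (n + 1), p.coeff i * (x - c) ^ i = -(q.coeff n * (x - c) ^ (n + 1)) := by
  induction n with
  | zero =>
    rw [Finset.sum_range_one, coeff_zero_of_sub_mul hg hf]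
    ring
  | succ n ih =>
    rw [Finset.sum_range_succ, ih, coeff_succ_of_sub_mul hg hf]
    ring

end PowerSeries

theorem sum_partial_fractions_limit_general {𝕜 : Type*} [NontriviallyNormedField 𝕜] (r : ℕ)
    {F : 𝕜 → 𝕜} {p : FormalMultilinearSeries 𝕜 𝕜 𝕜} {c x : 𝕜} (hF : HasFPowerSeriesAt F p c)
    (hx : x ≠ c) :
    Filter.Tendsto (fun y : Fin r → 𝕜 => dividedDifference F (Fin.cons x y : Fin (r + 1) → 𝕜))
      (𝓝[{y : Fin r → 𝕜 | Function.Injective (Fin.cons x y : Fin (r + 1) → 𝕜)}] fun _ => c)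
      (𝓝 ((F x - ∑ i ∈ Finset.range r, p.coeff i * (x - c) ^ i) / (x - c) ^ r)) := by
  have hxc : x - c ≠ 0 := sub_ne_zero.2 hx
  have hF' : HasFPowerSeriesAt (fun z => (z - x) * (F z / (z - x))) p c := hF.congr <| by
    filter_upwards [isOpen_ne.mem_nhds hx.symm] with z hz
    exact (mul_div_cancel₀ _ (sub_ne_zero.2 hz)).symm
  obtain ⟨q, hq⟩ : AnalyticAt 𝕜 (fun z => F z / (z - x)) c :=
    AnalyticAt.fun_div ⟨p, hF⟩ (by fun_prop) (sub_ne_zero.2 hx.symm)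
  have hprod : Filter.Tendsto (fun y : Fin r → 𝕜 => F x / ∏ i, (x - y i)) (𝓝 fun _ => c)
      (𝓝 (F x / (x - c) ^ r)) := by
    refine tendsto_const_nhds.div ?_ (pow_ne_zero _ hxc)
    have hcont : Continuous fun y : Fin r → 𝕜 => ∏ i, (x - y i) := by fun_prop
    simpa using hcont.tendsto fun _ => c
  simp only [dividedDifference_cons, sub_div]
  cases r with
  | zero => simpa [dividedDifference] using hprod.mono_left nhdsWithin_le_nhds
  | succ n =>
    rw [sum_coeff_mul_pow_of_sub_mul hq hF', neg_div, sub_neg_eq_add,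
      mul_div_cancel_right₀ _ (pow_ne_zero _ hxc)]
    exact (hprod.mono_left nhdsWithin_le_nhds).add <| (tendsto_dividedDifference hq n).mono_left <|
      nhdsWithin_mono _ fun y hy => (Fin.cons_injective_iff.1 hy).2

/-- For `F` analytic near `1` with Taylor coefficients `a_i = F^{(i)}(1)/i!`, and fixed
`x₁ ≠ 1` in a neighborhood of `1`, the limit as `x₂,…,x_{r+1} → 1` of
`∑_j F(x_j)/∏_{i≠j}(x_j - x_i)` is the `r`-th Taylor remainder of `F` divided by `(x₁-1)^r`. -/
theorem sum_partial_fractions_limit (r : ℕ) (hr : 1 ≤ r) (F : ℂ → ℂ)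
    (U : Set ℂ) (hU : IsOpen U) (h1U : (1 : ℂ) ∈ U)
    (hF : AnalyticOnNhd ℂ F U)
    (x₁ : ℂ) (hx₁U : x₁ ∈ U) (hx₁ : x₁ ≠ 1) :
    Filter.Tendsto
      (fun y : Fin r → ℂ =>
        let v : Fin (r + 1) → ℂ := Fin.cons x₁ y
        ∑ j : Fin (r + 1),
          F (v j) / ∏ i ∈ Finset.univ.erase j, (v j - v i))
      (𝓝[{y : Fin r → ℂ | Function.Injective (Fin.cons x₁ y : Fin (r + 1) → ℂ)}] (fun _ => 1))
      (𝓝 ((F x₁ - ∑ i ∈ Finset.range r,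
              (iteratedDeriv i F 1 / (Nat.factorial i : ℂ)) * (x₁ - 1) ^ i) / (x₁ - 1) ^ r)) := by
  simpa only [FormalMultilinearSeries.coeff_ofScalars] using!
    sum_partial_fractions_limit_general r (hF 1 h1U).hasFPowerSeriesAt hx₁
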